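/- arXiv:1901.02179 — 2 statements merged into one kernel-verified Lean document; each statement's English description precedes it below -/
import Mathlib

section
/- The set of objective values of the POP equals the set of objective values of the conic program over Γ^A ∩ J: { f_0(w) : w ∈ ℝ^n, w ≥ 0, f_i(w) = 0 (i = 1,…,m) } = { ⟨Q^0, X⟩ : X ∈ Γ^A, ⟨Q^i, X⟩ = 0 (i = 1,…,m), ⟨H^0, X⟩ = 1 }. Consequently ζ* := inf{ f_0(w) : w ≥ 0, f_i(w) = 0 (i=1,…,m) } equals inf{ ⟨Q^0, X⟩ : X ∈ Γ^A ∩ J, ⟨H^0, X⟩ = 1 } (infima taken in the extended reals). -/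
open MvPolynomial

noncomputable section

open scoped Classical

variable {n : ℕ}

/-- The vector `u^A(x)` of monomials `x^α` for `α ∈ A`. -/
def uA (A : Finset (Fin (n+1) →₀ ℕ)) (x : Fin (n+1) → ℝ) (a : A) : ℝ :=
  ∏ i, x i ^ (a : Fin (n+1) →₀ ℕ) i

/-- The rank-one moment matrix `u^A(x) u^A(x)ᵀ`. -/
def momMat (A : Finset (Fin (n+1) →₀ ℕ)) (x : Fin (n+1) → ℝ) : Matrix A A ℝ :=
  fun a b => uA A x a * uA A x b

/-- The cone `Γ^A = { u^A(x) u^A(x)ᵀ : x ∈ ℝ^{1+n}, x ≥ 0 }`. -/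
def GammaA (A : Finset (Fin (n+1) →₀ ℕ)) : Set (Matrix A A ℝ) :=
  { X | ∃ x : Fin (n+1) → ℝ, (∀ i, 0 ≤ x i) ∧ X = momMat A x }

/-- The extended completely positive cone `CPP^A = conv Γ^A`. -/
def CPPA (A : Finset (Fin (n+1) →₀ ℕ)) : Set (Matrix A A ℝ) :=
  convexHull ℝ (GammaA A)

/-- The trace inner product `⟨P, X⟩ = Σ_{a,b} P_{ab} X_{ab}`. -/
def ip {A : Finset (Fin (n+1) →₀ ℕ)} (P X : Matrix A A ℝ) : ℝ :=
  ∑ a : A, ∑ b : A, P a b * X a b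

/-- The matrix `H^0` whose `(α^ω, α^ω)` entry is `1` and all other entries are `0`. -/
def H0mat (A : Finset (Fin (n+1) →₀ ℕ)) (ω : ℕ) : Matrix A A ℝ :=
  fun a b =>
    if (a : Fin (n+1) →₀ ℕ) = Finsupp.single 0 ω ∧ (b : Fin (n+1) →₀ ℕ) = Finsupp.single 0 ω
    then 1 else 0

/-- `J_p = { X ∈ CPP^A : ⟨Q^i, X⟩ = 0 (i = 1,…,p) }`. -/
def Jset (A : Finset (Fin (n+1) →₀ ℕ)) (Q : ℕ → Matrix A A ℝ) (p : ℕ) :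
    Set (Matrix A A ℝ) :=
  { X ∈ CPPA A | ∀ i, 1 ≤ i → i ≤ p → ip (Q i) X = 0 }

/-- `S̄_p = { x ∈ ℝ^{1+n}_+ : f̄_i(x) = 0 (i = 1,…,p) }`. -/
def Sbar (fb : ℕ → MvPolynomial (Fin (n+1)) ℝ) (p : ℕ) : Set (Fin (n+1) → ℝ) :=
  { x | (∀ j, 0 ≤ x j) ∧ ∀ i, 1 ≤ i → i ≤ p → eval x (fb i) = 0 }

/-- `S̃_p = { w ∈ ℝ^n_+ : f̄_i(0, w) = 0 (i = 1,…,p) }`. -/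
def Stilde (fb : ℕ → MvPolynomial (Fin (n+1)) ℝ) (p : ℕ) : Set (Fin n → ℝ) :=
  { w | (∀ j, 0 ≤ w j) ∧ ∀ i, 1 ≤ i → i ≤ p → eval (Fin.cons 0 w) (fb i) = 0 }

/-- `S_p = { w ∈ ℝ^n_+ : f_i(w) = 0 (i = 1,…,p) }`. -/
def Sset (f : ℕ → MvPolynomial (Fin n) ℝ) (p : ℕ) : Set (Fin n → ℝ) :=
  { w | (∀ j, 0 ≤ w j) ∧ ∀ i, 1 ≤ i → i ≤ p → eval w (f i) = 0 }

/-- Infimum of a set of reals, taken in the extended reals. -/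
def erInf (s : Set ℝ) : EReal := sInf ((fun r : ℝ => (r : EReal)) '' s)

/-- `F` is a face of the convex set `C`. -/
def IsFace {V : Type*} [AddCommGroup V] [Module ℝ V] (C F : Set V) : Prop :=
  F ⊆ C ∧ Convex ℝ F ∧
    ∀ y ∈ C, ∀ z ∈ C, ∀ t : ℝ, 0 < t → t < 1 → (1 - t) • y + t • z ∈ F → y ∈ F ∧ z ∈ F

/-!
The linear condition `⟨H⁰, X⟩ = 1` reads off one diagonal entry: on `X = u^A(x) u^A(x)ᵀ` it says
`x₀ ^ (2ω) = 1`, which for `x₀ ≥ 0` and `ω ≠ 0` means `x₀ = 1`. The points of `Γ^A` on this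
hyperplane are therefore the moment matrices of the points `(1, w)` with `w ≥ 0`, where `⟨Qⁱ, ·⟩`
takes the value `f_i(w)`. Intersecting `Γ^A` with `J` imposes the same constraints as
`⟨Qⁱ, X⟩ = 0`, since `Γ^A ⊆ CPP^A`.
-/

section MomentMatrices

variable {A : Finset (Fin (n + 1) →₀ ℕ)} {ω : ℕ}

theorem uA_single {i : Fin (n + 1)} {k : ℕ} (h : Finsupp.single i k ∈ A) (x : Fin (n + 1) → ℝ) :
    uA A x ⟨Finsupp.single i k, h⟩ = x i ^ k := by
  simp only [uA, Finsupp.single_apply, pow_ite, pow_zero, Finset.prod_ite_eq, Finset.mem_univ,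
    if_true]

theorem ip_single (a b : A) (c : ℝ) (X : Matrix A A ℝ) :
    ip (Matrix.single a b c) X = c * X a b := by
  simp only [ip, Matrix.single_apply, ite_and, ite_mul, zero_mul, Finset.sum_ite_irrel,
    Finset.sum_const_zero, Finset.sum_ite_eq, Finset.mem_univ, if_true]

theorem H0mat_eq_single (h : Finsupp.single 0 ω ∈ A) :
    H0mat A ω = Matrix.single ⟨Finsupp.single 0 ω, h⟩ ⟨Finsupp.single 0 ω, h⟩ 1 := by
  ext a b
  simp only [H0mat, Matrix.single_apply, Subtype.ext_iff, eq_comm]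

theorem ip_H0mat_momMat (h : Finsupp.single 0 ω ∈ A) (x : Fin (n + 1) → ℝ) :
    ip (H0mat A ω) (momMat A x) = x 0 ^ (2 * ω) := by
  rw [H0mat_eq_single h, ip_single, one_mul, momMat, uA_single, two_mul, pow_add]

theorem mem_GammaA_and_ip_H0mat_eq_one_iff (h : Finsupp.single 0 ω ∈ A) (hω : ω ≠ 0)
    {X : Matrix A A ℝ} :
    X ∈ GammaA A ∧ ip (H0mat A ω) X = 1 ↔
      ∃ w : Fin n → ℝ, (∀ j, 0 ≤ w j) ∧ X = momMat A (Fin.cons 1 w) := by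
  constructor
  · rintro ⟨⟨x, hx, rfl⟩, hH⟩
    rw [ip_H0mat_momMat h] at hH
    have hx0 : x 0 = 1 :=
      (pow_eq_one_iff_of_nonneg (hx 0) (mul_ne_zero two_ne_zero hω)).mp hH
    refine ⟨Fin.tail x, fun j => hx j.succ, ?_⟩
    rw [← hx0, Fin.cons_self_tail]
  · rintro ⟨w, hw, rfl⟩
    refine ⟨⟨Fin.cons 1 w, Fin.cases zero_le_one hw, rfl⟩, ?_⟩
    rw [ip_H0mat_momMat h, Fin.cons_zero, one_pow]

theorem setOf_momMat_cons_one_eq_setOf_mem_GammaA (h : Finsupp.single 0 ω ∈ A) (hω : ω ≠ 0)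
    {β : Type*} (P : Matrix A A ℝ → Prop) (g : Matrix A A ℝ → β) :
    { y | ∃ w : Fin n → ℝ, (∀ j, 0 ≤ w j) ∧
        P (momMat A (Fin.cons 1 w)) ∧ y = g (momMat A (Fin.cons 1 w)) } =
      { y | ∃ X ∈ GammaA A, P X ∧ ip (H0mat A ω) X = 1 ∧ y = g X } := by
  ext y
  constructor
  · rintro ⟨w, hw, hP, hy⟩
    obtain ⟨hX, hH⟩ := (mem_GammaA_and_ip_H0mat_eq_one_iff h hω).mpr ⟨w, hw, rfl⟩
    exact ⟨_, hX, hP, hH, hy⟩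
  · rintro ⟨X, hX, hP, hH, hy⟩
    obtain ⟨w, hw, rfl⟩ := (mem_GammaA_and_ip_H0mat_eq_one_iff h hω).mp ⟨hX, hH⟩
    exact ⟨w, hw, hP, hy⟩

theorem mem_GammaA_inter_Jset_iff {Q : ℕ → Matrix A A ℝ} {p : ℕ} {X : Matrix A A ℝ} :
    X ∈ GammaA A ∩ Jset A Q p ↔ X ∈ GammaA A ∧ ∀ i, 1 ≤ i → i ≤ p → ip (Q i) X = 0 :=
  and_congr_right fun hX => and_iff_right (subset_convexHull ℝ _ hX)

end MomentMatrices

theorem stmt8_general {ω m : ℕ} (hω : ω ≠ 0) {A : Finset (Fin (n + 1) →₀ ℕ)}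
    (hA : Finsupp.single 0 ω ∈ A) {f : ℕ → MvPolynomial (Fin n) ℝ} {Q : ℕ → Matrix A A ℝ}
    (hQ : ∀ i ≤ m, ∀ w, eval w (f i) = ip (Q i) (momMat A (Fin.cons 1 w))) :
    ({ y : ℝ | ∃ w : Fin n → ℝ, (∀ j, 0 ≤ w j) ∧
          (∀ i, 1 ≤ i → i ≤ m → eval w (f i) = 0) ∧ y = eval w (f 0) }
        = { y : ℝ | ∃ X ∈ GammaA A, (∀ i, 1 ≤ i → i ≤ m → ip (Q i) X = 0) ∧
            ip (H0mat A ω) X = 1 ∧ y = ip (Q 0) X }) ∧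
    erInf { y : ℝ | ∃ w : Fin n → ℝ, (∀ j, 0 ≤ w j) ∧
          (∀ i, 1 ≤ i → i ≤ m → eval w (f i) = 0) ∧ y = eval w (f 0) }
      = erInf { y : ℝ | ∃ X ∈ GammaA A ∩ Jset A Q m,
          ip (H0mat A ω) X = 1 ∧ y = ip (Q 0) X } := by
  have feasible_iff (w : Fin n → ℝ) : (∀ i, 1 ≤ i → i ≤ m → eval w (f i) = 0) ↔
      ∀ i, 1 ≤ i → i ≤ m → ip (Q i) (momMat A (Fin.cons 1 w)) = 0 :=
    forall₃_congr fun i _ hi => by rw [hQ i hi]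
  have values_eq := setOf_momMat_cons_one_eq_setOf_mem_GammaA hA hω
    (fun X => ∀ i, 1 ≤ i → i ≤ m → ip (Q i) X = 0) (ip (Q 0))
  simp only [feasible_iff, hQ 0 m.zero_le, mem_GammaA_inter_Jset_iff, and_assoc]
  exact ⟨values_eq, congrArg erInf values_eq⟩

theorem stmt8
    (n ω m : ℕ) (hn : 0 < n) (hω : 0 < ω) (hm : 0 < m)
    (A : Finset (Fin (n+1) →₀ ℕ)) (hA : A.Nonempty)
    (hAdeg : ∀ α ∈ A, ∑ i, α i = ω)
    (hAtop : Finsupp.single (0 : Fin (n+1)) ω ∈ A)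
    (f : ℕ → MvPolynomial (Fin n) ℝ)
    (fb : ℕ → MvPolynomial (Fin (n+1)) ℝ)
    (hfdeg : ∀ i ≤ m, (f i).totalDegree ≤ 2 * ω)
    (hfbhom : ∀ i ≤ m, (fb i).IsHomogeneous (2 * ω))
    (hfb1 : ∀ i ≤ m, ∀ w : Fin n → ℝ, eval (Fin.cons 1 w) (fb i) = eval w (f i))
    (Q : ℕ → Matrix A A ℝ)
    (hQsymm : ∀ i ≤ m, (Q i).IsSymm)
    (hQrep : ∀ i ≤ m, ∀ x : Fin (n+1) → ℝ, eval x (fb i) = ip (Q i) (momMat A x))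
    :
    ({ y : ℝ | ∃ w : Fin n → ℝ, (∀ j, 0 ≤ w j) ∧
          (∀ i, 1 ≤ i → i ≤ m → eval w (f i) = 0) ∧ y = eval w (f 0) }
        = { y : ℝ | ∃ X ∈ GammaA A, (∀ i, 1 ≤ i → i ≤ m → ip (Q i) X = 0) ∧
            ip (H0mat A ω) X = 1 ∧ y = ip (Q 0) X }) ∧
    erInf { y : ℝ | ∃ w : Fin n → ℝ, (∀ j, 0 ≤ w j) ∧
          (∀ i, 1 ≤ i → i ≤ m → eval w (f i) = 0) ∧ y = eval w (f 0) }
      = erInf { y : ℝ | ∃ X ∈ GammaA A ∩ Jset A Q m,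
          ip (H0mat A ω) X = 1 ∧ y = ip (Q 0) X } := by
  exact stmt8_general hω.ne' hAtop fun i hi w => by rw [← hfb1 i hi, hQrep i hi]
end
end

section
/- (Theorem 5.1(i)) Let p ∈ {1,…,m}. Assume that J_{p−1} is a face of CPP^A, and that f̄_p(x) ≥ 0 for every x ∈ S̄_{p−1}. Then J_p is a face of J_{p−1} and a face of CPP^A. -/
/-!
A face of the convex hull of `s` is the convex hull of the points of `s` that it contains. Hence if
`J_{p-1}` is a face of `CPP^A`, it is generated by the matrices `u^A(x) u^A(x)ᵀ` with
`x ∈ S̄_{p-1}`. On these `⟨Q^p, ·⟩` takes the values `f̄_p(x) ≥ 0`, so it is nonnegative on all of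
`J_{p-1}`, and `J_p` is the face that the supporting hyperplane `⟨Q^p, X⟩ = 0` cuts out of it.
-/

open MvPolynomial

noncomputable section

open scoped Classical

variable {n : ℕ}

section Extreme

variable {𝕜 E : Type*} [Semiring 𝕜] [PartialOrder 𝕜] [AddCommMonoid E] [Module 𝕜 E]

theorem subset_convexHull_inter_of_isExtreme [ZeroLEOneClass 𝕜] {s F : Set E}
    (hF : IsExtreme 𝕜 (convexHull 𝕜 s) F) : F ⊆ convexHull 𝕜 (s ∩ F) := by
  -- The set on the right is convex: if an inner point of a segment is in `F`, so are its ends.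
  suffices h : convexHull 𝕜 s ⊆ {x ∈ convexHull 𝕜 s | x ∈ F → x ∈ convexHull 𝕜 (s ∩ F)} from
    fun x hx => (h (hF.subset hx)).2 hx
  refine convexHull_min
    (fun x hx => ⟨subset_convexHull 𝕜 s hx, fun hxF => subset_convexHull 𝕜 _ ⟨hx, hxF⟩⟩)
    (convex_iff_openSegment_subset.2 ?_)
  rintro x ⟨hx, hxF⟩ y ⟨hy, hyF⟩ z hz
  refine ⟨(convex_convexHull 𝕜 s).openSegment_subset hx hy hz, fun hzF => ?_⟩
  exact (convex_convexHull 𝕜 (s ∩ F)).openSegment_subset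
    (hxF (hF.left_mem_of_mem_openSegment hx hy hzF hz))
    (hyF (hF.right_mem_of_mem_openSegment hx hy hzF hz)) hz

theorem isExtreme_inter_hyperplane {β : Type*} [AddCommMonoid β] [PartialOrder β]
    [IsOrderedCancelAddMonoid β] [Module 𝕜 β] [PosSMulStrictMono 𝕜 β] {C : Set E} {φ : E → β}
    (hφ : IsLinearMap 𝕜 φ) {c : β} (hC : ∀ x ∈ C, c ≤ φ x) :
    IsExtreme 𝕜 C (C ∩ {x | φ x = c}) := by
  refine ⟨Set.inter_subset_left, ?_⟩
  rintro x hx y hy _ ⟨-, hz⟩ ⟨a, b, ha, hb, hab, rfl⟩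
  refine ⟨hx, ((hC x hx).eq_of_not_lt fun hlt => hz.not_gt ?_).symm⟩
  calc c = a • c + b • c := (Convex.combo_self hab c).symm
    _ < a • φ x + b • φ y :=
      add_lt_add_of_lt_of_le (smul_lt_smul_of_pos_left hlt ha)
        (smul_le_smul_of_nonneg_left (hC y hy) hb.le)
    _ = φ (a • x + b • y) := by rw [hφ.map_add, hφ.map_smul, hφ.map_smul]

end Extreme

section Face

variable {V : Type*} [AddCommGroup V] [Module ℝ V] {C F G s : Set V}

theorem isFace_iff_isExtreme_and_convex : IsFace C F ↔ IsExtreme ℝ C F ∧ Convex ℝ F := by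
  constructor
  · rintro ⟨hFC, hconv, hF⟩
    refine ⟨⟨hFC, ?_⟩, hconv⟩
    rintro x hx y hy _ hz ⟨a, b, ha, hb, hab, rfl⟩
    obtain rfl : a = 1 - b := eq_sub_of_add_eq hab
    exact (hF x hx y hy b hb (sub_pos.1 ha) hz).1
  · rintro ⟨hF, hconv⟩
    refine ⟨hF.subset, hconv, fun y hy z hz t ht0 ht1 h => ?_⟩
    have hseg : (1 - t) • y + t • z ∈ openSegment ℝ y z :=
      ⟨1 - t, t, sub_pos.2 ht1, ht0, sub_add_cancel 1 t, rfl⟩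
    exact ⟨hF.left_mem_of_mem_openSegment hy hz h hseg,
      hF.right_mem_of_mem_openSegment hy hz h hseg⟩

namespace IsFace

theorem isExtreme (hF : IsFace C F) : IsExtreme ℝ C F :=
  (isFace_iff_isExtreme_and_convex.1 hF).1

theorem convex (hF : IsFace C F) : Convex ℝ F :=
  hF.2.1

theorem trans (hF : IsFace C F) (hG : IsFace F G) : IsFace C G :=
  isFace_iff_isExtreme_and_convex.2 ⟨hF.isExtreme.trans hG.isExtreme, hG.convex⟩

theorem eq_convexHull_inter (hF : IsFace (convexHull ℝ s) F) : F = convexHull ℝ (s ∩ F) :=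
  (subset_convexHull_inter_of_isExtreme hF.isExtreme).antisymm
    (convexHull_min Set.inter_subset_right hF.convex)

end IsFace

theorem isFace_inter_hyperplane (hC : Convex ℝ C) {φ : V → ℝ} (hφ : IsLinearMap ℝ φ) {c : ℝ}
    (hc : ∀ x ∈ C, c ≤ φ x) : IsFace C (C ∩ {x | φ x = c}) :=
  isFace_iff_isExtreme_and_convex.2
    ⟨isExtreme_inter_hyperplane hφ hc, hC.inter (convex_hyperplane hφ c)⟩

end Face

section MomentCone

variable {A : Finset (Fin (n + 1) →₀ ℕ)} {Q : ℕ → Matrix A A ℝ}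
  {fb : ℕ → MvPolynomial (Fin (n + 1)) ℝ} {p : ℕ}

theorem isLinearMap_ip (P : Matrix A A ℝ) : IsLinearMap ℝ (ip P) where
  map_add X Y := by simp only [ip, Matrix.add_apply, mul_add, Finset.sum_add_distrib]
  map_smul c X := by
    simp only [ip, Matrix.smul_apply, smul_eq_mul, mul_left_comm _ c, Finset.mul_sum]

theorem Jset_succ (A : Finset (Fin (n + 1) →₀ ℕ)) (Q : ℕ → Matrix A A ℝ) (p : ℕ) :
    Jset A Q (p + 1) = Jset A Q p ∩ {X | ip (Q (p + 1)) X = 0} := by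
  ext X
  constructor
  · rintro ⟨hX, h⟩
    exact ⟨⟨hX, fun i h1 hi => h i h1 (by omega)⟩, h (p + 1) (by omega) le_rfl⟩
  · rintro ⟨⟨hX, h⟩, hp⟩
    refine ⟨hX, fun i h1 hi => ?_⟩
    rcases Nat.le_succ_iff.1 hi with hi | rfl
    exacts [h i h1 hi, hp]

theorem GammaA_inter_Jset
    (hQ : ∀ i, 1 ≤ i → i ≤ p → ∀ x, eval x (fb i) = ip (Q i) (momMat A x)) :
    GammaA A ∩ Jset A Q p = momMat A '' Sbar fb p := by
  ext X
  constructor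
  · rintro ⟨⟨x, hx, rfl⟩, -, h⟩
    exact ⟨x, ⟨hx, fun i h1 hi => (hQ i h1 hi x).trans (h i h1 hi)⟩, rfl⟩
  · rintro ⟨x, ⟨hx, h⟩, rfl⟩
    have hmem : momMat A x ∈ GammaA A := ⟨x, hx, rfl⟩
    exact ⟨hmem, subset_convexHull ℝ _ hmem, fun i h1 hi => (hQ i h1 hi x).symm.trans (h i h1 hi)⟩

theorem Jset_eq_convexHull_of_isFace
    (hQ : ∀ i, 1 ≤ i → i ≤ p → ∀ x, eval x (fb i) = ip (Q i) (momMat A x))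
    (hface : IsFace (CPPA A) (Jset A Q p)) :
    Jset A Q p = convexHull ℝ (momMat A '' Sbar fb p) := by
  rw [← GammaA_inter_Jset hQ]
  exact hface.eq_convexHull_inter

end MomentCone

theorem stmt13_general (A : Finset (Fin (n + 1) →₀ ℕ)) (fb : ℕ → MvPolynomial (Fin (n + 1)) ℝ)
    (Q : ℕ → Matrix A A ℝ) (p : ℕ)
    (hQ : ∀ i, 1 ≤ i → i ≤ p + 1 → ∀ x, eval x (fb i) = ip (Q i) (momMat A x))
    (hface : IsFace (CPPA A) (Jset A Q p)) (hpos : ∀ x ∈ Sbar fb p, 0 ≤ eval x (fb (p + 1))) :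
    IsFace (Jset A Q p) (Jset A Q (p + 1)) ∧ IsFace (CPPA A) (Jset A Q (p + 1)) := by
  have hlin := isLinearMap_ip (Q (p + 1))
  have hnonneg : ∀ X ∈ Jset A Q p, 0 ≤ ip (Q (p + 1)) X := by
    rw [Jset_eq_convexHull_of_isFace (fun i h1 hi => hQ i h1 (by omega)) hface]
    refine convexHull_min (Set.image_subset_iff.2 fun x hx => ?_) (convex_halfSpace_ge hlin 0)
    exact (hpos x hx).trans_eq (hQ (p + 1) (by omega) le_rfl x)
  have hsucc : IsFace (Jset A Q p) (Jset A Q (p + 1)) := by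
    rw [Jset_succ]
    exact isFace_inter_hyperplane hface.convex hlin hnonneg
  exact ⟨hsucc, hface.trans hsucc⟩

theorem stmt13
    (n ω m : ℕ) (hn : 0 < n) (hω : 0 < ω) (hm : 0 < m)
    (A : Finset (Fin (n+1) →₀ ℕ)) (hA : A.Nonempty)
    (hAdeg : ∀ α ∈ A, ∑ i, α i = ω)
    (hAtop : Finsupp.single (0 : Fin (n+1)) ω ∈ A)
    (f : ℕ → MvPolynomial (Fin n) ℝ)
    (fb : ℕ → MvPolynomial (Fin (n+1)) ℝ)
    (hfdeg : ∀ i ≤ m, (f i).totalDegree ≤ 2 * ω)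
    (hfbhom : ∀ i ≤ m, (fb i).IsHomogeneous (2 * ω))
    (hfb1 : ∀ i ≤ m, ∀ w : Fin n → ℝ, eval (Fin.cons 1 w) (fb i) = eval w (f i))
    (Q : ℕ → Matrix A A ℝ)
    (hQsymm : ∀ i ≤ m, (Q i).IsSymm)
    (hQrep : ∀ i ≤ m, ∀ x : Fin (n+1) → ℝ, eval x (fb i) = ip (Q i) (momMat A x))
    (p : ℕ) (hp1 : 1 ≤ p) (hpm : p ≤ m)
    (hface : IsFace (CPPA A) (Jset A Q (p - 1)))
    (hpos : ∀ x ∈ Sbar fb (p - 1), 0 ≤ eval x (fb p)) :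
    IsFace (Jset A Q (p - 1)) (Jset A Q p) ∧ IsFace (CPPA A) (Jset A Q p) := by
  obtain ⟨p, rfl⟩ := Nat.exists_eq_add_of_le' hp1
  exact stmt13_general A fb Q p (fun i _ hi => hQrep i (hi.trans hpm)) hface hpos
end
end
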